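/- (Theorem 1, third-order part, first alternative.) Assume the IMEX Runge–Kutta coefficients satisfy the third-order conditions of additive Runge–Kutta methods: Σ_{i} ω̃_i = Σ_{i} ω_i = 1; with c̃_i := Σ_{j} ã_{ij} and c_i := Σ_{j} a_{ij}, Σ_{i} w_i d_i = 1/2 for every choice w ∈ {ω̃, ω}, d ∈ {c̃, c}; Σ_{i} w_i d_i e_i = 1/3 for every choice w ∈ {ω̃, ω}, d, e ∈ {c̃, c}; and Σ_{i,j} w_i m_{ij} d_j = 1/6 for every choice w ∈ {ω̃, ω}, m ∈ {ã, a}, d ∈ {c̃, c}. Assume in addition, with γ̃_i := Σ_{j} α̃_{ij} and γ_i := Σ_{j} α_{ij}, that Σ_{i} ω_i γ_i² = 1/3, Σ_{i} ω_i γ̃_i² = 1/3, and Σ_{i} ω_i γ_i γ̃_i = 1/3. Then the combined forward–adjoint scheme is of third order: for every exact solution (y, p̃, p) of the coupled system with p̃(0) = p(0) there exist constants C > 0 and h₀ > 0 such that for every 0 < h ≤ h₀, any one step of the combined scheme started at (y(0), p̃(0), p(0)) with p̃_n = p_n, whose stage values Y^(i), P̃^(i), P^(i) satisfy the stage equations and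 lie within distance 1 of y(0) and p(0) respectively, satisfies ‖y_{n+1} − y(h)‖ + ‖p̃_{n+1} − p̃(h)‖ + ‖p_{n+1} − p(h)‖ ≤ C h⁴. -/

import Mathlib

/-!
The combined scheme is an additive Runge–Kutta method for the coupled forward–adjoint system, split
into the parts that drive `y` and, for each of the two copies `p̃`, `p` of the adjoint variable, the
parts that drive that copy. Its elementary differentials are strongly constrained, because the
adjoint variables enter linearly: a tree with two adjoint branches at its root contributes nothing,
and neither does an adjoint branch for one copy attached to a part that reads the other copy.

For the remaining trees the adjoint coefficients satisfy `ω_i α_ij = ω'_j (ω_i - a_ji)`, where `ω`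
and `a` belong to the copy that the stage computes and `ω'` to the part of the field it is applied
to. Summing over `i` gives `∑ i, ω_i α_ij = ω'_j (1 - c_j)`, and summing over `j` gives
`ω_i γ_i = ω_i - ∑ j, ω'_j a_ji`; both reduce every order condition that involves adjoint branches
to the conditions of order three of the forward method.
-/

open Finset Matrix

/-- The Jacobian matrix of a map `g : ℝ^d → ℝ^d` at `x`:
entry `(i, j)` is `∂ g_i / ∂ x_j (x)`. -/
noncomputable def jacMat {d : ℕ} (g : (Fin d → ℝ) → (Fin d → ℝ))
    (x : Fin d → ℝ) : Matrix (Fin d) (Fin d) ℝ :=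
  fun i j => fderiv ℝ g x (Pi.single j 1) i

section Expansions

open Asymptotics Filter Topology

variable {V W : Type*} [NormedAddCommGroup V] [NormedSpace ℝ V]
  [NormedAddCommGroup W] [NormedSpace ℝ W]

theorem isBigO_norm_pow_succ_of_hasFDerivAt {R : V → W} {R' : V → V →L[ℝ] W} {z₀ : V} {n : ℕ}
    (hR : ∀ᶠ z in 𝓝 z₀, HasFDerivAt R (R' z) z) (hR₀ : R z₀ = 0)
    (hR' : R' =O[𝓝 z₀] fun z => ‖z - z₀‖ ^ n) :
    R =O[𝓝 z₀] fun z => ‖z - z₀‖ ^ (n + 1) := by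
  have hfderiv : fderiv ℝ R =O[𝓝 z₀] fun z => ‖z - z₀‖ ^ (n : ℝ) :=
    hR'.congr' (hR.mono fun z hz => hz.fderiv.symm)
      (.of_forall fun z => (Real.rpow_natCast _ n).symm)
  exact_mod_cast isBigO_norm_rpow_add_one_of_fderiv_of_apply_eq_zero n.cast_nonneg
    (hR.mono fun z hz => hz.differentiableAt) hfderiv hR₀

theorem isBigO_pow_succ_of_hasDerivAt {R R' : ℝ → W} {n : ℕ}
    (hR : ∀ᶠ t in 𝓝 0, HasDerivAt R (R' t) t) (hR₀ : R 0 = 0)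
    (hR' : R' =O[𝓝 0] fun t => t ^ n) : R =O[𝓝 0] fun t => t ^ (n + 1) := by
  have hR'_clm : (fun t => ContinuousLinearMap.toSpanSingleton ℝ (R' t)) =O[𝓝 0]
      fun t : ℝ => ‖t - 0‖ ^ n := by
    refine .of_norm_norm ?_
    simpa using hR'.norm_norm
  refine (isBigO_norm_pow_succ_of_hasFDerivAt (hR.mono fun t ht => ht.hasFDerivAt) hR₀
    hR'_clm).trans (.of_norm_norm ?_)
  simpa using isBigO_refl _ _

theorem taylor_one_isBigO {F : V → W} {z₀ : V} (hF : ContDiffAt ℝ 2 F z₀) :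
    (fun z => F z - F z₀ - fderiv ℝ F z₀ (z - z₀)) =O[𝓝 z₀] fun z => ‖z - z₀‖ ^ 2 := by
  have hF' : ContDiffAt ℝ 1 (fderiv ℝ F) z₀ := hF.fderiv_right (by norm_num)
  refine isBigO_norm_pow_succ_of_hasFDerivAt (R' := fun z => fderiv ℝ F z - fderiv ℝ F z₀)
    ?_ (by simp) ?_
  · filter_upwards [hF.eventually (by simp)] with z hz
    exact ((hz.differentiableAt (by simp)).hasFDerivAt.sub_const _).sub
      ((fderiv ℝ F z₀).hasFDerivAt.comp z ((hasFDerivAt_id z).sub_const z₀))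
  · simpa using (hF'.differentiableAt (by simp)).isBigO_sub.norm_right

theorem taylor_two_isBigO {F : V → W} {z₀ : V} (hF : ContDiffAt ℝ 3 F z₀) :
    (fun z => F z - F z₀ - fderiv ℝ F z₀ (z - z₀)
      - (1 / 2 : ℝ) • fderiv ℝ (fderiv ℝ F) z₀ (z - z₀) (z - z₀))
      =O[𝓝 z₀] fun z => ‖z - z₀‖ ^ 3 := by
  have hF' : ContDiffAt ℝ 2 (fderiv ℝ F) z₀ := hF.fderiv_right (by norm_num)
  refine isBigO_norm_pow_succ_of_hasFDerivAt ?_ (by simp) (taylor_one_isBigO hF')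
  filter_upwards [hF.eventually (by simp)] with z hz
  have hsub := (hasFDerivAt_id (𝕜 := ℝ) z).sub_const z₀
  have hlin : HasFDerivAt (fun z => fderiv ℝ F z₀ (z - z₀)) (fderiv ℝ F z₀) z :=
    (fderiv ℝ F z₀).hasFDerivAt.comp z hsub
  have hquad := ((fderiv ℝ (fderiv ℝ F) z₀).hasFDerivAt.comp z hsub).clm_apply hsub
  have hsymm : IsSymmSndFDerivAt ℝ F z₀ := hF.isSymmSndFDerivAt (by simp; norm_num)
  refine ((((hz.differentiableAt (by simp)).hasFDerivAt.sub_const _).sub hlin).sub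
    (hquad.const_smul (1 / 2 : ℝ))).congr_fderiv ?_
  ext v
  simp only [_root_.sub_apply, _root_.smul_apply, _root_.add_apply,
    ContinuousLinearMap.comp_apply, ContinuousLinearMap.flip_apply, ContinuousLinearMap.coe_id',
    id, Function.comp, hsymm v (z - z₀)]
  module

variable {X : Type*} {l : Filter X} {h : X → ℝ}

theorem isBigO_pow_of_sub_smul_isBigO (hh : Tendsto h l (𝓝 0)) {f : X → W} {v : W} {m : ℕ}
    (hf : (fun x => f x - h x ^ m • v) =O[l] fun x => h x ^ (m + 1)) :
    f =O[l] fun x => h x ^ m := by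
  have hpow : (fun x => h x ^ (m + 1)) =O[l] fun x => h x ^ m :=
    (isLittleO_pow_pow m.lt_succ_self).isBigO.comp_tendsto hh
  have hsmul : (fun x => h x ^ m • v) =O[l] fun x => h x ^ m := by
    simpa using (isBigO_refl (fun x => h x ^ m) l).smul
      (isBigO_const_const v (one_ne_zero (α := ℝ)) l)
  simpa using (hf.trans hpow).add hsmul

theorem isBigO_clm_apply {L : X → V →L[ℝ] W} {v : X → V} {a b : X → ℝ}
    (hL : L =O[l] a) (hv : v =O[l] b) : (fun x => L x (v x)) =O[l] fun x => a x * b x :=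
  (IsBigO.of_bound 1 (.of_forall fun x => by simpa using (L x).le_opNorm (v x))).trans
    (hL.norm_left.mul hv.norm_left)

variable {F : V → W} {Z : X → V} {z₀ u q : V}

theorem tendsto_of_sub_isBigO {E : Type*} [NormedAddCommGroup E] {Z : X → E} {z₀ : E}
    (hh : Tendsto h l (𝓝 0)) (hZ : (fun x => Z x - z₀) =O[l] h) :
    Tendsto Z l (𝓝 z₀) := by
  simpa using (hZ.trans_tendsto hh).add_const z₀

theorem comp_sub_isBigO (hF : DifferentiableAt ℝ F z₀) (hh : Tendsto h l (𝓝 0))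
    (hZ : (fun x => Z x - z₀) =O[l] h) : (fun x => F (Z x) - F z₀) =O[l] h :=
  (hF.isBigO_sub.comp_tendsto (tendsto_of_sub_isBigO hh hZ)).trans hZ

theorem comp_first_order_isBigO (hF : ContDiffAt ℝ 2 F z₀) (hh : Tendsto h l (𝓝 0))
    (hZ : (fun x => Z x - z₀ - h x • u) =O[l] fun x => h x ^ 2) :
    (fun x => F (Z x) - F z₀ - h x • fderiv ℝ F z₀ u) =O[l] fun x => h x ^ 2 := by
  have hZ₀ : (fun x => Z x - z₀) =O[l] h := by
    simpa using isBigO_pow_of_sub_smul_isBigO (m := 1) hh (by simpa using hZ)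
  have hTaylor := ((taylor_one_isBigO hF).comp_tendsto (tendsto_of_sub_isBigO hh hZ₀)).trans
    (hZ₀.norm_left.pow 2)
  refine (hTaylor.add (((fderiv ℝ F z₀).isBigO_comp _ l).trans hZ)).congr_left fun x => ?_
  simp only [Function.comp, map_sub, map_smul]
  abel

theorem comp_second_order_isBigO (hF : ContDiffAt ℝ 3 F z₀) (hh : Tendsto h l (𝓝 0))
    (hZ : (fun x => Z x - z₀ - h x • u - h x ^ 2 • q) =O[l] fun x => h x ^ 3) :
    (fun x => F (Z x) - F z₀ - h x • fderiv ℝ F z₀ u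
      - h x ^ 2 • (fderiv ℝ F z₀ q + (1 / 2 : ℝ) • fderiv ℝ (fderiv ℝ F) z₀ u u))
      =O[l] fun x => h x ^ 3 := by
  have hZ₁ : (fun x => Z x - z₀ - h x • u) =O[l] fun x => h x ^ 2 :=
    isBigO_pow_of_sub_smul_isBigO hh hZ
  have hZ₀ : (fun x => Z x - z₀) =O[l] h := by
    simpa using isBigO_pow_of_sub_smul_isBigO (m := 1) hh (by simpa using hZ₁)
  have hu : (fun x => h x • u) =O[l] h := by
    simpa using (isBigO_refl h l).smul (isBigO_const_const u (one_ne_zero (α := ℝ)) l)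
  have hTaylor := ((taylor_two_isBigO hF).comp_tendsto (tendsto_of_sub_isBigO hh hZ₀)).trans
    (hZ₀.norm_left.pow 3)
  have hlin := ((fderiv ℝ F z₀).isBigO_comp _ l).trans hZ
  -- `B (Z - z₀) (Z - z₀) - B (h u) (h u) = B (Z - z₀ - h u) (Z - z₀) + B (h u) (Z - z₀ - h u)`
  have hquad_left : _ =O[l] fun x => h x ^ 3 :=
    (isBigO_clm_apply (((fderiv ℝ (fderiv ℝ F) z₀).isBigO_comp _ l).trans hZ₁) hZ₀).congr_right
      fun x => by ring
  have hquad_right : _ =O[l] fun x => h x ^ 3 :=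
    (isBigO_clm_apply (((fderiv ℝ (fderiv ℝ F) z₀).isBigO_comp _ l).trans hu) hZ₁).congr_right
      fun x => by ring
  refine ((hTaylor.add hlin).add
    ((hquad_left.add hquad_right).const_smul_left (1 / 2 : ℝ))).congr_left fun x => ?_
  simp only [Function.comp, map_sub, map_smul, _root_.sub_apply, _root_.smul_apply, Pi.smul_apply]
  module

theorem ode_solution_expansion {Φ : W → W} {z : ℝ → W} (hΦ : ContDiffAt ℝ 3 Φ (z 0))
    (hz : ∀ᶠ t in 𝓝 0, HasDerivAt z (Φ (z t)) t) :
    (fun t => z t - z 0 - t • Φ (z 0) - t ^ 2 • (1 / 2 : ℝ) • fderiv ℝ Φ (z 0) (Φ (z 0))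
      - t ^ 3 • (1 / 6 : ℝ) • (fderiv ℝ Φ (z 0) (fderiv ℝ Φ (z 0) (Φ (z 0)))
        + fderiv ℝ (fderiv ℝ Φ) (z 0) (Φ (z 0)) (Φ (z 0))))
      =O[𝓝 0] fun t => t ^ 4 := by
  have hid : Tendsto (fun t : ℝ => t) (𝓝 0) (𝓝 0) := tendsto_id
  have hΦ₂ : ContDiffAt ℝ 2 Φ (z 0) := hΦ.of_le (by norm_num)
  have hlinear (v : W) (t : ℝ) := (hasDerivAt_id (𝕜 := ℝ) t).smul_const v
  have hmonomial (n : ℕ) (v : W) (t : ℝ) := (hasDerivAt_pow (𝕜 := ℝ) n t).smul_const v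
  have order₀ : (fun t => z t - z 0) =O[𝓝 0] fun t : ℝ => t := by
    simpa using hz.self_of_nhds.differentiableAt.isBigO_sub
  have order₁ : (fun t => z t - z 0 - t • Φ (z 0)) =O[𝓝 0] fun t : ℝ => t ^ 2 := by
    refine isBigO_pow_succ_of_hasDerivAt (R' := fun t => Φ (z t) - Φ (z 0)) ?_ (by simp)
      (by simpa using comp_sub_isBigO (hΦ.differentiableAt (by simp)) hid order₀)
    filter_upwards [hz] with t ht
    exact ((ht.sub_const (z 0)).sub (hlinear _ t)).congr_deriv (by simp)
  have order₂ : (fun t => z t - z 0 - t • Φ (z 0)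
      - t ^ 2 • (1 / 2 : ℝ) • fderiv ℝ Φ (z 0) (Φ (z 0))) =O[𝓝 0] fun t : ℝ => t ^ 3 := by
    refine isBigO_pow_succ_of_hasDerivAt ?_ (by simp) (comp_first_order_isBigO hΦ₂ hid order₁)
    filter_upwards [hz] with t ht
    refine (((ht.sub_const (z 0)).sub (hlinear _ t)).sub (hmonomial 2 _ t)).congr_deriv ?_
    simp only [one_smul, Nat.cast_ofNat, Nat.add_one_sub_one, pow_one]
    module
  refine isBigO_pow_succ_of_hasDerivAt ?_ (by simp) (comp_second_order_isBigO hΦ hid order₂)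
  filter_upwards [hz] with t ht
  refine ((((ht.sub_const (z 0)).sub (hlinear _ t)).sub (hmonomial 2 _ t)).sub
    (hmonomial 3 _ t)).congr_deriv ?_
  simp only [one_smul, Nat.cast_ofNat, Nat.add_one_sub_one, pow_one, smul_add, map_smul]
  module

end Expansions

section AdditiveRungeKutta

open Asymptotics Filter Topology

variable {K ι W X : Type*} [Fintype ι] [NormedAddCommGroup W] [NormedSpace ℝ W]

/-- The abscissae (row sums) `c_i = ∑ j, a_ij` of a Runge–Kutta tableau. -/
def abscissa (A : ι → ι → ℝ) (i : ι) : ℝ := ∑ j, A i j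

/-- The conditions of order three for an additive Runge–Kutta method with tableaux `A k` and
weights `b k`. -/
structure ThirdOrderConditions (A : K → ι → ι → ℝ) (b : K → ι → ℝ) : Prop where
  sum_weight k : ∑ i, b k i = 1
  sum_weight_abscissa k l : ∑ i, b k i * abscissa (A l) i = 1 / 2
  sum_weight_abscissa_abscissa k l m :
    ∑ i, b k i * abscissa (A l) i * abscissa (A m) i = 1 / 3
  sum_weight_tableau_abscissa k l m :
    ∑ i, ∑ j, b k i * A l i j * abscissa (A m) j = 1 / 6

/-- The conditions of order three, each one multiplied by its elementary differential for the
fields `F` at `z₀`: a condition whose elementary differential vanishes is not imposed. -/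
structure ThirdOrderConditionsAt (A : K → ι → ι → ℝ) (b : K → ι → ℝ) (F : K → W → W)
    (z₀ : W) : Prop where
  sum_weight k : ∑ i, b k i = 1
  sum_weight_abscissa k l :
    (∑ i, b k i * abscissa (A l) i) • fderiv ℝ (F k) z₀ (F l z₀)
      = (1 / 2 : ℝ) • fderiv ℝ (F k) z₀ (F l z₀)
  sum_weight_abscissa_abscissa k l m :
    (∑ i, b k i * abscissa (A l) i * abscissa (A m) i) •
        fderiv ℝ (fderiv ℝ (F k)) z₀ (F l z₀) (F m z₀)
      = (1 / 3 : ℝ) • fderiv ℝ (fderiv ℝ (F k)) z₀ (F l z₀) (F m z₀)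
  sum_weight_tableau_abscissa k l m :
    (∑ i, ∑ j, b k i * A l i j * abscissa (A m) j) •
        fderiv ℝ (F k) z₀ (fderiv ℝ (F l) z₀ (F m z₀))
      = (1 / 6 : ℝ) • fderiv ℝ (F k) z₀ (fderiv ℝ (F l) z₀ (F m z₀))

variable [Fintype K]

/-- The stage equations of the additive Runge–Kutta method with tableaux `A k` for the split
system `z' = ∑ k, F k z`, with step size `h` and initial value `z₀`. -/
def IsStageSolution (A : K → ι → ι → ℝ) (F : K → W → W) (h : ℝ) (z₀ : W) (Z : ι → W) : Prop :=
  ∀ i, Z i = z₀ + h • ∑ k, ∑ j, A k i j • F k (Z j)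

/-- The update of the additive Runge–Kutta method with weights `b k` and stages `Z`. -/
def arkStep (b : K → ι → ℝ) (F : K → W → W) (h : ℝ) (z₀ : W) (Z : ι → W) : W :=
  z₀ + h • ∑ k, ∑ i, b k i • F k (Z i)

/-- The coefficient of `h` in the expansion of the `i`-th stage. -/
noncomputable def stageCoeffOne (A : K → ι → ι → ℝ) (F : K → W → W) (z₀ : W) (i : ι) : W :=
  ∑ k, abscissa (A k) i • F k z₀

/-- The coefficient of `h ^ 2` in the expansion of the `i`-th stage. -/
noncomputable def stageCoeffTwo (A : K → ι → ι → ℝ) (F : K → W → W) (z₀ : W) (i : ι) : W :=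
  ∑ k, ∑ j, A k i j • fderiv ℝ (F k) z₀ (stageCoeffOne A F z₀ j)

section StageExpansion

variable {A : K → ι → ι → ℝ} {b : K → ι → ℝ} {F : K → W → W} {z₀ : W}
  {l : Filter X} {h : X → ℝ} {Z : X → ι → W}

theorem smul_sum_isBigO (c : K → ι → ℝ) {f : K → ι → X → W} {n : ℕ}
    (hf : ∀ k i, f k i =O[l] fun x => h x ^ n) :
    (fun x => h x • ∑ k, ∑ i, c k i • f k i x) =O[l] fun x => h x ^ (n + 1) := by
  refine ((isBigO_refl h l).smul (IsBigO.fun_sum (s := univ) fun k _ =>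
    IsBigO.fun_sum (s := univ) fun i _ => (hf k i).const_smul_left (c k i))).congr_right
      fun x => ?_
  rw [smul_eq_mul, pow_succ']

theorem stage_sub_isBigO (hZ : ∀ᶠ x in l, IsStageSolution A F (h x) z₀ (Z x))
    (hbdd : ∀ k i, (fun x => F k (Z x i)) =O[l] fun _ => (1 : ℝ)) (i : ι) :
    (fun x => Z x i - z₀) =O[l] h := by
  have hsum := smul_sum_isBigO (h := h) (n := 0) (fun k j => A k i j)
    (by simpa only [pow_zero] using hbdd)
  refine hsum.congr' ?_ (.of_forall fun x => by simp)
  filter_upwards [hZ] with x hx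
  rw [hx i, add_sub_cancel_left]

theorem stage_first_order_isBigO (hF : ∀ k, DifferentiableAt ℝ (F k) z₀)
    (hh : Tendsto h l (𝓝 0)) (hZ : ∀ᶠ x in l, IsStageSolution A F (h x) z₀ (Z x))
    (hbdd : ∀ k i, (fun x => F k (Z x i)) =O[l] fun _ => (1 : ℝ)) (i : ι) :
    (fun x => Z x i - z₀ - h x • stageCoeffOne A F z₀ i) =O[l] fun x => h x ^ 2 := by
  have hsum := smul_sum_isBigO (n := 1) (fun k j => A k i j) fun k j => by
    simpa only [pow_one] using comp_sub_isBigO (hF k) hh (stage_sub_isBigO hZ hbdd j)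
  refine hsum.congr' ?_ .rfl
  filter_upwards [hZ] with x hx
  conv_rhs => rw [hx i, add_sub_cancel_left]
  simp only [stageCoeffOne, abscissa, sum_smul, ← smul_sub, ← sum_sub_distrib]

theorem stage_second_order_isBigO (hF : ∀ k, ContDiffAt ℝ 2 (F k) z₀)
    (hh : Tendsto h l (𝓝 0)) (hZ : ∀ᶠ x in l, IsStageSolution A F (h x) z₀ (Z x))
    (hbdd : ∀ k i, (fun x => F k (Z x i)) =O[l] fun _ => (1 : ℝ)) (i : ι) :
    (fun x => Z x i - z₀ - h x • stageCoeffOne A F z₀ i - h x ^ 2 • stageCoeffTwo A F z₀ i)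
      =O[l] fun x => h x ^ 3 := by
  have hF₁ k : DifferentiableAt ℝ (F k) z₀ := (hF k).differentiableAt (by simp)
  have hsum := smul_sum_isBigO (h := h) (n := 2) (fun k j => A k i j) fun k j =>
    comp_first_order_isBigO (hF k) hh (stage_first_order_isBigO hF₁ hh hZ hbdd j)
  refine hsum.congr' ?_ .rfl
  filter_upwards [hZ] with x hx
  conv_rhs => rw [hx i, add_sub_cancel_left]
  simp only [stageCoeffOne, stageCoeffTwo, abscissa, sum_smul, smul_sum, ← sum_sub_distrib]
  exact sum_congr rfl fun k _ => sum_congr rfl fun j _ => by module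

theorem arkStep_expansion (hF : ∀ k, ContDiffAt ℝ 3 (F k) z₀)
    (hh : Tendsto h l (𝓝 0)) (hZ : ∀ᶠ x in l, IsStageSolution A F (h x) z₀ (Z x))
    (hbdd : ∀ k i, (fun x => F k (Z x i)) =O[l] fun _ => (1 : ℝ)) :
    (fun x => arkStep b F (h x) z₀ (Z x) - z₀ - h x • ∑ k, ∑ i, b k i • F k z₀
      - h x ^ 2 • ∑ k, ∑ i, b k i • fderiv ℝ (F k) z₀ (stageCoeffOne A F z₀ i)
      - h x ^ 3 • (∑ k, ∑ i, b k i • fderiv ℝ (F k) z₀ (stageCoeffTwo A F z₀ i)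
        + (1 / 2 : ℝ) • ∑ k, ∑ i, b k i • fderiv ℝ (fderiv ℝ (F k)) z₀
            (stageCoeffOne A F z₀ i) (stageCoeffOne A F z₀ i)))
      =O[l] fun x => h x ^ 4 := by
  have hF₂ k : ContDiffAt ℝ 2 (F k) z₀ := (hF k).of_le (by norm_num)
  have hsum := smul_sum_isBigO (h := h) (n := 3) b fun k i =>
    comp_second_order_isBigO (hF k) hh (stage_second_order_isBigO hF₂ hh hZ hbdd i)
  refine hsum.congr_left fun x => ?_
  simp only [arkStep, add_sub_cancel_left, smul_add, smul_sum, ← sum_sub_distrib,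
    ← sum_add_distrib]
  exact sum_congr rfl fun k _ => sum_congr rfl fun i _ => by module

end StageExpansion

section SumField

variable {F : K → W → W} {z₀ : W}

theorem fderiv_sum_eventuallyEq (hF : ∀ k, ∀ᶠ z in 𝓝 z₀, DifferentiableAt ℝ (F k) z) :
    fderiv ℝ (fun z => ∑ k, F k z) =ᶠ[𝓝 z₀] fun z => ∑ k, fderiv ℝ (F k) z := by
  filter_upwards [eventually_all.2 hF] with z hz
  exact fderiv_fun_sum fun k _ => hz k

theorem fderiv_fderiv_sum (hF : ∀ k, ContDiffAt ℝ 2 (F k) z₀) :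
    fderiv ℝ (fderiv ℝ fun z => ∑ k, F k z) z₀ = ∑ k, fderiv ℝ (fderiv ℝ (F k)) z₀ := by
  have hF₁ k : ∀ᶠ z in 𝓝 z₀, DifferentiableAt ℝ (F k) z :=
    ((hF k).eventually (by simp)).mono fun z hz => hz.differentiableAt (by simp)
  rw [(fderiv_sum_eventuallyEq hF₁).fderiv_eq]
  exact fderiv_fun_sum fun k _ =>
    ((hF k).fderiv_right (m := 1) (by norm_num)).differentiableAt (by simp)

end SumField

namespace ThirdOrderConditionsAt

variable {A : K → ι → ι → ℝ} {b : K → ι → ℝ} {F : K → W → W} {z₀ : W}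

theorem sum_fderiv_stageCoeffOne (hA : ThirdOrderConditionsAt A b F z₀) (k : K) :
    ∑ i, b k i • fderiv ℝ (F k) z₀ (stageCoeffOne A F z₀ i)
      = (1 / 2 : ℝ) • fderiv ℝ (F k) z₀ (∑ l, F l z₀) := by
  simp only [stageCoeffOne, map_sum, map_smul, smul_sum, ← hA.sum_weight_abscissa, sum_smul,
    smul_smul]
  exact sum_comm

theorem sum_fderiv_fderiv_stageCoeffOne (hA : ThirdOrderConditionsAt A b F z₀) (k : K) :
    ∑ i, b k i • fderiv ℝ (fderiv ℝ (F k)) z₀ (stageCoeffOne A F z₀ i) (stageCoeffOne A F z₀ i)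
      = (1 / 3 : ℝ) • fderiv ℝ (fderiv ℝ (F k)) z₀ (∑ l, F l z₀) (∑ l, F l z₀) := by
  calc
    _ = ∑ i, ∑ m, ∑ l, (b k i * abscissa (A l) i * abscissa (A m) i) •
          fderiv ℝ (fderiv ℝ (F k)) z₀ (F l z₀) (F m z₀) := by
      simp only [stageCoeffOne, map_sum, map_smul, _root_.sum_apply, _root_.smul_apply, smul_sum,
        smul_smul]
      refine sum_congr rfl fun i _ => sum_congr rfl fun m _ => sum_congr rfl fun l _ => ?_
      rw [mul_comm (abscissa (A m) i), mul_assoc]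
    _ = ∑ m, ∑ l, (∑ i, b k i * abscissa (A l) i * abscissa (A m) i) •
          fderiv ℝ (fderiv ℝ (F k)) z₀ (F l z₀) (F m z₀) := by
      rw [sum_comm]
      refine sum_congr rfl fun m _ => ?_
      rw [sum_comm]
      simp only [sum_smul]
    _ = _ := by
      simp only [hA.sum_weight_abscissa_abscissa, map_sum, _root_.sum_apply, smul_sum]

theorem sum_fderiv_stageCoeffTwo (hA : ThirdOrderConditionsAt A b F z₀) (k : K) :
    ∑ i, b k i • fderiv ℝ (F k) z₀ (stageCoeffTwo A F z₀ i)
      = (1 / 6 : ℝ) • fderiv ℝ (F k) z₀ (∑ l, fderiv ℝ (F l) z₀ (∑ m, F m z₀)) := by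
  calc
    _ = ∑ i, ∑ l, ∑ j, ∑ m, (b k i * A l i j * abscissa (A m) j) •
          fderiv ℝ (F k) z₀ (fderiv ℝ (F l) z₀ (F m z₀)) := by
      simp only [stageCoeffOne, stageCoeffTwo, map_sum, map_smul, smul_sum, smul_smul, mul_assoc]
    _ = ∑ l, ∑ m, (∑ i, ∑ j, b k i * A l i j * abscissa (A m) j) •
          fderiv ℝ (F k) z₀ (fderiv ℝ (F l) z₀ (F m z₀)) := by
      rw [sum_comm]
      refine sum_congr rfl fun l _ => ?_
      simp only [sum_smul]
      rw [sum_comm (s := univ (α := K))]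
      exact sum_congr rfl fun i _ => sum_comm
    _ = _ := by
      simp only [hA.sum_weight_tableau_abscissa, map_sum, smul_sum]

end ThirdOrderConditionsAt

theorem arkStep_sub_solution_isBigO {A : K → ι → ι → ℝ} {b : K → ι → ℝ} {F : K → W → W}
    {z : ℝ → W} {l : Filter X} {h : X → ℝ} {Z : X → ι → W}
    (hA : ThirdOrderConditionsAt A b F (z 0)) (hF : ∀ k, ContDiffAt ℝ 3 (F k) (z 0))
    (hz : ∀ᶠ t in 𝓝 0, HasDerivAt z (∑ k, F k (z t)) t) (hh : Tendsto h l (𝓝 0))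
    (hZ : ∀ᶠ x in l, IsStageSolution A F (h x) (z 0) (Z x))
    (hbdd : ∀ k i, (fun x => F k (Z x i)) =O[l] fun _ => (1 : ℝ)) :
    (fun x => arkStep b F (h x) (z 0) (Z x) - z (h x)) =O[l] fun x => h x ^ 4 := by
  have hF₂ k : ContDiffAt ℝ 2 (F k) (z 0) := (hF k).of_le (by norm_num)
  have hweight k : ∑ i, b k i • F k (z 0) = F k (z 0) := by
    rw [← sum_smul, hA.sum_weight, one_smul]
  have hfderiv : fderiv ℝ (fun z => ∑ k, F k z) (z 0) = ∑ k, fderiv ℝ (F k) (z 0) :=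
    fderiv_fun_sum fun k _ => (hF k).differentiableAt (by simp)
  have hexact := (ode_solution_expansion (ContDiffAt.sum fun k _ => hF k) hz).comp_tendsto hh
  refine ((arkStep_expansion (b := b) hF hh hZ hbdd).sub hexact).congr_left fun x => ?_
  simp only [hweight, hA.sum_fderiv_stageCoeffOne, hA.sum_fderiv_stageCoeffTwo,
    hA.sum_fderiv_fderiv_stageCoeffOne, ← smul_sum, fderiv_fderiv_sum hF₂, hfderiv,
    Function.comp, _root_.sum_apply]
  module

end AdditiveRungeKutta

section UniformBound

open Asymptotics Filter Topology

variable {S W : Type*} [NormedAddCommGroup W]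

theorem exists_forall_norm_le_mul_pow_of_isBigO {T : Set (ℝ × S)} {e : ℝ × S → W} {n : ℕ}
    (he : e =O[comap Prod.fst (𝓝[>] 0) ⊓ 𝓟 T] fun x => x.1 ^ n) :
    ∃ C > (0 : ℝ), ∃ h₀ > (0 : ℝ), ∀ h, 0 < h → h ≤ h₀ → ∀ Z, (h, Z) ∈ T →
      ‖e (h, Z)‖ ≤ C * h ^ n := by
  obtain ⟨C, hC, hbound⟩ := he.exists_pos
  rw [IsBigOWith, eventually_inf_principal, eventually_comap] at hbound
  obtain ⟨h₀, hh₀, hIoc⟩ := mem_nhdsGT_iff_exists_Ioc_subset.1 hbound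
  refine ⟨C, hC, h₀, hh₀, fun h hpos hle Z hZ => (hIoc ⟨hpos, hle⟩ (h, Z) rfl hZ).trans_eq ?_⟩
  rw [norm_pow, Real.norm_of_nonneg hpos.le]

variable {K ι : Type*} [Fintype K] [Fintype ι] [NormedSpace ℝ W] [ProperSpace W]

theorem arkStep_local_error {A : K → ι → ι → ℝ} {b : K → ι → ℝ} {F : K → W → W}
    {z : ℝ → W} (hA : ThirdOrderConditionsAt A b F (z 0)) (hF : ∀ k, ContDiff ℝ 3 (F k))
    (hz : ∀ᶠ t in 𝓝 0, HasDerivAt z (∑ k, F k (z t)) t) (ρ : ℝ) :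
    ∃ C > (0 : ℝ), ∃ h₀ > (0 : ℝ), ∀ h, 0 < h → h ≤ h₀ → ∀ Z : ι → W,
      IsStageSolution A F h (z 0) Z → (∀ i, ‖Z i - z 0‖ ≤ ρ) →
      ‖arkStep b F h (z 0) Z - z h‖ ≤ C * h ^ 4 := by
  set T : Set (ℝ × (ι → W)) :=
    {x | IsStageSolution A F x.1 (z 0) x.2 ∧ ∀ i, ‖x.2 i - z 0‖ ≤ ρ}
  set l := comap Prod.fst (𝓝[>] (0 : ℝ)) ⊓ 𝓟 T
  have hT : ∀ᶠ x in l, x ∈ T := mem_inf_of_right (mem_principal_self T)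
  have hstep : Tendsto Prod.fst l (𝓝 0) :=
    (tendsto_comap.mono_left inf_le_left).mono_right nhdsWithin_le_nhds
  have hbdd k i : (fun x => F k (x.2 i)) =O[l] fun _ => (1 : ℝ) := by
    obtain ⟨C, hC⟩ := (isCompact_closedBall (z 0) ρ).exists_bound_of_continuousOn
      (hF k).continuous.continuousOn
    refine .of_bound C (hT.mono fun x hx => ?_)
    simpa using hC (x.2 i) (by simpa [dist_eq_norm] using hx.2 i)
  obtain ⟨C, hC, h₀, hh₀, hbound⟩ := exists_forall_norm_le_mul_pow_of_isBigO
    (arkStep_sub_solution_isBigO hA (fun k => (hF k).contDiffAt) hz hstep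
      (hT.mono fun x hx => hx.1) hbdd)
  exact ⟨C, hC, h₀, hh₀, fun h hpos hle Z hZ hρ => hbound h hpos hle Z ⟨hZ, hρ⟩⟩

end UniformBound

section AdjointTableau

variable {K ι : Type*} {A : K → ι → ι → ℝ} {b : K → ι → ℝ} {σ : K}

/-- The tableau applied to part `κ` of the adjoint field in the stages of the `σ`-th copy of the
adjoint variable. In the paper, the copies are `p̃` and `p`, and these are the four tableaux
`α̃, α` (for `σ` explicit) and `β̃, β` (for `σ` implicit). -/
noncomputable def adjointTableau (A : K → ι → ι → ℝ) (b : K → ι → ℝ) (σ κ : K) (i j : ι) : ℝ :=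
  b κ j - b κ j / b σ i * A σ j i

theorem weight_mul_adjointTableau {i : ι} (hb : b σ i ≠ 0) (κ : K) (j : ι) :
    b σ i * adjointTableau A b σ κ i j = b κ j * (b σ i - A σ j i) := by
  unfold adjointTableau
  field_simp

variable [Fintype ι]

theorem weight_mul_abscissa_adjointTableau {i : ι} (hb : b σ i ≠ 0) {κ : K}
    (hκ : ∑ j, b κ j = 1) :
    b σ i * abscissa (adjointTableau A b σ κ) i = b σ i - ∑ j, b κ j * A σ j i := by
  simp only [abscissa, mul_sum, weight_mul_adjointTableau hb, mul_sub, sum_sub_distrib, ← sum_mul,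
    hκ, one_mul]

theorem sum_weight_adjointTableau_mul (hb : ∀ i, b σ i ≠ 0) (hσ : ∑ i, b σ i = 1) (κ : K)
    (x : ι → ℝ) :
    ∑ i, ∑ j, b σ i * adjointTableau A b σ κ i j * x j
      = ∑ j, b κ j * x j - ∑ j, b κ j * abscissa (A σ) j * x j := by
  simp only [weight_mul_adjointTableau (hb _)]
  rw [sum_comm, ← sum_sub_distrib]
  refine sum_congr rfl fun j _ => ?_
  rw [← sum_mul, ← mul_sum, sum_sub_distrib, hσ, abscissa]
  ring

namespace ThirdOrderConditions

theorem sum_weight_abscissa_adjoint (hA : ThirdOrderConditions A b) (hb : ∀ k i, b k i ≠ 0)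
    (σ κ : K) : ∑ i, b σ i * abscissa (adjointTableau A b σ κ) i = 1 / 2 := by
  have hsum := sum_weight_adjointTableau_mul (A := A) (hb σ) (hA.sum_weight σ) κ 1
  simp only [Pi.one_apply, mul_one, hA.sum_weight, hA.sum_weight_abscissa] at hsum
  simp only [abscissa, mul_sum, hsum]
  norm_num

theorem sum_weight_abscissa_abscissa_adjoint (hA : ThirdOrderConditions A b)
    (hb : ∀ k i, b k i ≠ 0) (σ κ m : K) :
    ∑ i, b σ i * abscissa (A m) i * abscissa (adjointTableau A b σ κ) i = 1 / 3 := by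
  have hterm i : b σ i * abscissa (A m) i * abscissa (adjointTableau A b σ κ) i
      = b σ i * abscissa (A m) i - ∑ j, b κ j * A σ j i * abscissa (A m) i := by
    rw [mul_right_comm, weight_mul_abscissa_adjointTableau (hb σ i) (hA.sum_weight κ), sub_mul,
      sum_mul]
  simp only [hterm]
  rw [sum_sub_distrib, sum_comm, hA.sum_weight_abscissa, hA.sum_weight_tableau_abscissa]
  norm_num

theorem sum_weight_adjoint_abscissa (hA : ThirdOrderConditions A b) (hb : ∀ k i, b k i ≠ 0)
    (σ κ m : K) :
    ∑ i, ∑ j, b σ i * adjointTableau A b σ κ i j * abscissa (A m) j = 1 / 6 := by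
  rw [sum_weight_adjointTableau_mul (hb σ) (hA.sum_weight σ), hA.sum_weight_abscissa,
    hA.sum_weight_abscissa_abscissa]
  norm_num

theorem sum_weight_adjoint_abscissa_adjoint (hA : ThirdOrderConditions A b)
    (hb : ∀ k i, b k i ≠ 0) (σ κ m : K) :
    ∑ i, ∑ j, b σ i * adjointTableau A b σ κ i j * abscissa (adjointTableau A b κ m) j
      = 1 / 6 := by
  rw [sum_weight_adjointTableau_mul (hb σ) (hA.sum_weight σ), hA.sum_weight_abscissa_adjoint hb,
    hA.sum_weight_abscissa_abscissa_adjoint hb]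
  norm_num

end ThirdOrderConditions

end AdjointTableau

section LinearComposition

variable {U V V' W W' : Type*} [NormedAddCommGroup U] [NormedSpace ℝ U]
  [NormedAddCommGroup V] [NormedSpace ℝ V] [NormedAddCommGroup V'] [NormedSpace ℝ V']
  [NormedAddCommGroup W] [NormedSpace ℝ W] [NormedAddCommGroup W'] [NormedSpace ℝ W']

theorem fderiv_clm_apply_const {Ψ : V → V' →L[ℝ] W} {z : V} (hΨ : DifferentiableAt ℝ Ψ z)
    (w : V) (v : V') : fderiv ℝ (fun x => Ψ x v) z w = fderiv ℝ Ψ z w v := by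
  simp [fderiv_clm_apply hΨ (differentiableAt_const v)]

theorem fderiv_clm_comp_clm (L : W →L[ℝ] W') (M : U →L[ℝ] V) {f : V → W} {z : U}
    (hf : DifferentiableAt ℝ f (M z)) (v : U) :
    fderiv ℝ (fun x => L (f (M x))) z v = L (fderiv ℝ f (M z) (M v)) :=
  congr($((L.hasFDerivAt.comp z (hf.hasFDerivAt.comp z M.hasFDerivAt)).fderiv) v)

theorem fderiv_clm_comp_clm_apply (L : W →L[ℝ] W') (M : U →L[ℝ] V) (N : U →L[ℝ] V')
    {Ψ : V → V' →L[ℝ] W} {z : U} (hΨ : DifferentiableAt ℝ Ψ (M z)) (v : U) :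
    fderiv ℝ (fun x => L (Ψ (M x) (N x))) z v
      = L (fderiv ℝ Ψ (M z) (M v) (N z) + Ψ (M z) (N v)) := by
  have hderiv := L.hasFDerivAt.comp z
    ((hΨ.hasFDerivAt.comp z M.hasFDerivAt).clm_apply N.hasFDerivAt)
  refine congr($(HasFDerivAt.fderiv hderiv) v).trans ?_
  simp [add_comm]

theorem fderiv_fderiv_clm_comp_clm (L : W →L[ℝ] W') (M : U →L[ℝ] V) {f : V → W}
    (hf : ContDiff ℝ 2 f) (z w v : U) :
    fderiv ℝ (fderiv ℝ fun x => L (f (M x))) z w v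
      = L (fderiv ℝ (fderiv ℝ f) (M z) (M w) (M v)) := by
  have hf' : Differentiable ℝ (fderiv ℝ f) :=
    (hf.fderiv_right (m := 1) (by norm_num)).differentiable (by simp)
  have hcomp : ContDiff ℝ 2 fun x => L (f (M x)) := by fun_prop
  have hcomp' : Differentiable ℝ (fderiv ℝ fun x => L (f (M x))) :=
    (hcomp.fderiv_right (m := 1) (by norm_num)).differentiable (by simp)
  rw [← fderiv_clm_apply_const (hcomp' z), ← fderiv_clm_apply_const (hf' _)]
  simp only [fderiv_clm_comp_clm L M (hf.differentiable (by simp) _)]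
  exact fderiv_clm_comp_clm L M (f := fun y => fderiv ℝ f y (M v)) (by fun_prop) w

theorem fderiv_fderiv_clm_comp_clm_apply (L : W →L[ℝ] W') (M : U →L[ℝ] V) (N : U →L[ℝ] V')
    {Ψ : V → V' →L[ℝ] W} (hΨ : ContDiff ℝ 2 Ψ) (z w v : U) :
    fderiv ℝ (fderiv ℝ fun x => L (Ψ (M x) (N x))) z w v
      = L (fderiv ℝ (fderiv ℝ Ψ) (M z) (M w) (M v) (N z) + fderiv ℝ Ψ (M z) (M v) (N w)
        + fderiv ℝ Ψ (M z) (M w) (N v)) := by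
  have hΨ' : Differentiable ℝ (fderiv ℝ Ψ) :=
    (hΨ.fderiv_right (m := 1) (by norm_num)).differentiable (by simp)
  have hcomp : ContDiff ℝ 2 fun x => L (Ψ (M x) (N x)) := by fun_prop
  have hcomp' : Differentiable ℝ (fderiv ℝ fun x => L (Ψ (M x) (N x))) :=
    (hcomp.fderiv_right (m := 1) (by norm_num)).differentiable (by simp)
  have hΨ₁ : Differentiable ℝ Ψ := hΨ.differentiable (by simp)
  rw [← fderiv_clm_apply_const (hcomp' z), ← fderiv_clm_apply_const (hΨ' _)]
  simp only [fderiv_clm_comp_clm_apply L M N (hΨ₁ _), map_add L]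
  rw [fderiv_fun_add (by fun_prop) (by fun_prop), _root_.add_apply,
    fderiv_clm_comp_clm_apply L M N (Ψ := fun y => fderiv ℝ Ψ y (M v)) (by fun_prop) w,
    fderiv_clm_comp_clm L M (f := fun y => Ψ y (N v)) (by fun_prop) w,
    fderiv_clm_apply_const (hΨ₁ _), map_add L]

end LinearComposition

section CoupledField

variable {K E P : Type*} [DecidableEq K]
  [NormedAddCommGroup E] [NormedSpace ℝ E] [NormedAddCommGroup P] [NormedSpace ℝ P]

/-- The splitting of the forward–adjoint system `y' = ∑ k, f k y`, `(p σ)' = ∑ k, Φ k y (p k)`,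
whose adjoint variable has one copy `p σ` for each part `σ` of the forward field. The field
`(none, k)` drives `y` by the part `k`, and `(some σ, k)` drives `p σ` by the part `k`. -/
def coupledField (f : K → E → E) (Φ : K → E → P →L[ℝ] P) :
    Option K × K → E × (K → P) → E × (K → P)
  | (none, k), z => (f k z.1, 0)
  | (some σ, k), z => (0, Pi.single σ (Φ k z.1 (z.2 k)))

/-- The tableaux of the combined forward–adjoint scheme, for the splitting `coupledField`. -/
noncomputable def coupledTableau {ι : Type*} (A : K → ι → ι → ℝ) (b : K → ι → ℝ) :
    Option K × K → ι → ι → ℝ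
  | (none, k) => A k
  | (some σ, k) => adjointTableau A b σ k

section Differentials

variable [Finite K] {f : K → E → E} {Φ : K → E → P →L[ℝ] P}

theorem fderiv_coupledField_none {k : K} {z : E × (K → P)} (hf : DifferentiableAt ℝ (f k) z.1)
    (v : E × (K → P)) :
    fderiv ℝ (coupledField f Φ (none, k)) z v = (fderiv ℝ (f k) z.1 v.1, 0) := by
  cases nonempty_fintype K
  exact fderiv_clm_comp_clm (.inl ℝ E (K → P)) (.fst ℝ E (K → P)) hf v

theorem fderiv_coupledField_some {k : K} {z : E × (K → P)}
    (hΦ : DifferentiableAt ℝ (Φ k) z.1) (σ : K) (v : E × (K → P)) :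
    fderiv ℝ (coupledField f Φ (some σ, k)) z v
      = (0, Pi.single σ (fderiv ℝ (Φ k) z.1 v.1 (z.2 k) + Φ k z.1 (v.2 k))) := by
  cases nonempty_fintype K
  exact fderiv_clm_comp_clm_apply (.inr ℝ E (K → P) ∘L .single ℝ (fun _ => P) σ) (.fst ℝ E (K → P))
    ((.proj k : (K → P) →L[ℝ] P) ∘L .snd ℝ E (K → P)) hΦ v

theorem fderiv_fderiv_coupledField_none {k : K} (hf : ContDiff ℝ 2 (f k)) (z w v : E × (K → P)) :
    fderiv ℝ (fderiv ℝ (coupledField f Φ (none, k))) z w v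
      = (fderiv ℝ (fderiv ℝ (f k)) z.1 w.1 v.1, 0) := by
  cases nonempty_fintype K
  exact fderiv_fderiv_clm_comp_clm (.inl ℝ E (K → P)) (.fst ℝ E (K → P)) hf z w v

theorem fderiv_fderiv_coupledField_some {k : K} (hΦ : ContDiff ℝ 2 (Φ k)) (σ : K)
    (z w v : E × (K → P)) :
    fderiv ℝ (fderiv ℝ (coupledField f Φ (some σ, k))) z w v
      = (0, Pi.single σ (fderiv ℝ (fderiv ℝ (Φ k)) z.1 w.1 v.1 (z.2 k)
        + fderiv ℝ (Φ k) z.1 v.1 (w.2 k) + fderiv ℝ (Φ k) z.1 w.1 (v.2 k))) := by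
  cases nonempty_fintype K
  exact fderiv_fderiv_clm_comp_clm_apply (.inr ℝ E (K → P) ∘L .single ℝ (fun _ => P) σ)
    (.fst ℝ E (K → P)) ((.proj k : (K → P) →L[ℝ] P) ∘L .snd ℝ E (K → P)) hΦ z w v

variable {z v w : E × (K → P)}

theorem fderiv_coupledField_eq_zero {k : K} (hf : DifferentiableAt ℝ (f k) z.1)
    (hΦ : DifferentiableAt ℝ (Φ k) z.1) (hv : v.1 = 0) (hvk : v.2 k = 0) (ν : Option K) :
    fderiv ℝ (coupledField f Φ (ν, k)) z v = 0 := by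
  rcases ν with _ | σ
  · simp [fderiv_coupledField_none hf, hv]
  · simp [fderiv_coupledField_some hΦ, hv, hvk]

theorem fderiv_fderiv_coupledField_left_eq_zero {k : K} (hf : ContDiff ℝ 2 (f k))
    (hΦ : ContDiff ℝ 2 (Φ k)) (hw : w.1 = 0) (hwk : w.2 k = 0) (ν : Option K) :
    fderiv ℝ (fderiv ℝ (coupledField f Φ (ν, k))) z w v = 0 := by
  rcases ν with _ | σ
  · simp [fderiv_fderiv_coupledField_none hf, hw]
  · simp [fderiv_fderiv_coupledField_some hΦ, hw, hwk]

theorem fderiv_fderiv_coupledField_right_eq_zero {k : K} (hf : ContDiff ℝ 2 (f k))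
    (hΦ : ContDiff ℝ 2 (Φ k)) (hv : v.1 = 0) (hvk : v.2 k = 0) (ν : Option K) :
    fderiv ℝ (fderiv ℝ (coupledField f Φ (ν, k))) z w v = 0 := by
  rcases ν with _ | σ
  · simp [fderiv_fderiv_coupledField_none hf, hv]
  · simp [fderiv_fderiv_coupledField_some hΦ, hv, hvk]

theorem fderiv_fderiv_coupledField_eq_zero {k : K} (hf : ContDiff ℝ 2 (f k))
    (hΦ : ContDiff ℝ 2 (Φ k)) (hw : w.1 = 0) (hv : v.1 = 0) (ν : Option K) :
    fderiv ℝ (fderiv ℝ (coupledField f Φ (ν, k))) z w v = 0 := by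
  rcases ν with _ | σ
  · simp [fderiv_fderiv_coupledField_none hf, hv]
  · simp [fderiv_fderiv_coupledField_some hΦ, hw, hv]

namespace ThirdOrderConditions

variable {ι : Type*} [Fintype ι] {A : K → ι → ι → ℝ} {b : K → ι → ℝ}

theorem coupled_sum_weight_abscissa (hA : ThirdOrderConditions A b) (hb : ∀ k i, b k i ≠ 0)
    {z : E × (K → P)} (hf : ∀ k, DifferentiableAt ℝ (f k) z.1)
    (hΦ : ∀ k, DifferentiableAt ℝ (Φ k) z.1) (k l : Option K × K) :
    (∑ i, b k.2 i * abscissa (coupledTableau A b l) i) •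
        fderiv ℝ (coupledField f Φ k) z (coupledField f Φ l z)
      = (1 / 2 : ℝ) • fderiv ℝ (coupledField f Φ k) z (coupledField f Φ l z) := by
  obtain ⟨ν, κ⟩ := k
  rcases l with ⟨_ | σ, l⟩
  · exact congr($(hA.sum_weight_abscissa κ l) • _)
  · by_cases hσ : κ = σ
    · subst hσ
      exact congr($(hA.sum_weight_abscissa_adjoint hb κ l) • _)
    · rw [fderiv_coupledField_eq_zero (hf κ) (hΦ κ) rfl (Pi.single_eq_of_ne hσ _), smul_zero,
        smul_zero]

theorem coupled_sum_weight_abscissa_abscissa (hA : ThirdOrderConditions A b)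
    (hb : ∀ k i, b k i ≠ 0) (hf : ∀ k, ContDiff ℝ 2 (f k)) (hΦ : ∀ k, ContDiff ℝ 2 (Φ k))
    (z : E × (K → P)) (k l m : Option K × K) :
    (∑ i, b k.2 i * abscissa (coupledTableau A b l) i * abscissa (coupledTableau A b m) i) •
        fderiv ℝ (fderiv ℝ (coupledField f Φ k)) z (coupledField f Φ l z) (coupledField f Φ m z)
      = (1 / 3 : ℝ) • fderiv ℝ (fderiv ℝ (coupledField f Φ k)) z (coupledField f Φ l z)
        (coupledField f Φ m z) := by
  obtain ⟨ν, κ⟩ := k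
  rcases l with ⟨_ | σ, l⟩ <;> rcases m with ⟨_ | τ, m⟩
  · exact congr($(hA.sum_weight_abscissa_abscissa κ l m) • _)
  · by_cases hτ : κ = τ
    · subst hτ
      exact congr($(hA.sum_weight_abscissa_abscissa_adjoint hb κ m l) • _)
    · rw [fderiv_fderiv_coupledField_right_eq_zero (hf κ) (hΦ κ) rfl (Pi.single_eq_of_ne hτ _),
        smul_zero, smul_zero]
  · by_cases hσ : κ = σ
    · subst hσ
      simp only [mul_right_comm _ (abscissa (coupledTableau A b (some κ, l)) _)]
      exact congr($(hA.sum_weight_abscissa_abscissa_adjoint hb κ l m) • _)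
    · rw [fderiv_fderiv_coupledField_left_eq_zero (hf κ) (hΦ κ) rfl (Pi.single_eq_of_ne hσ _),
        smul_zero, smul_zero]
  · rw [fderiv_fderiv_coupledField_eq_zero (hf κ) (hΦ κ) rfl rfl, smul_zero, smul_zero]

theorem coupled_sum_weight_tableau_abscissa (hA : ThirdOrderConditions A b)
    (hb : ∀ k i, b k i ≠ 0) {z : E × (K → P)} (hf : ∀ k, DifferentiableAt ℝ (f k) z.1)
    (hΦ : ∀ k, DifferentiableAt ℝ (Φ k) z.1) (k l m : Option K × K) :
    (∑ i, ∑ j, b k.2 i * coupledTableau A b l i j * abscissa (coupledTableau A b m) j) •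
        fderiv ℝ (coupledField f Φ k) z (fderiv ℝ (coupledField f Φ l) z (coupledField f Φ m z))
      = (1 / 6 : ℝ) • fderiv ℝ (coupledField f Φ k) z
        (fderiv ℝ (coupledField f Φ l) z (coupledField f Φ m z)) := by
  obtain ⟨ν, κ⟩ := k
  rcases l with ⟨_ | σ, l⟩ <;> rcases m with ⟨_ | τ, m⟩
  · exact congr($(hA.sum_weight_tableau_abscissa κ l m) • _)
  · rw [fderiv_coupledField_none (hf l), coupledField, map_zero, Prod.mk_zero_zero, map_zero,
      smul_zero, smul_zero]
  · by_cases hσ : κ = σ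
    · subst hσ
      exact congr($(hA.sum_weight_adjoint_abscissa hb κ l m) • _)
    · rw [fderiv_coupledField_some (hΦ l), fderiv_coupledField_eq_zero (hf κ) (hΦ κ) rfl
        (Pi.single_eq_of_ne hσ _), smul_zero, smul_zero]
  · by_cases hτ : l = τ
    · by_cases hσ : κ = σ
      · subst hτ hσ
        exact congr($(hA.sum_weight_adjoint_abscissa_adjoint hb κ l m) • _)
      · rw [fderiv_coupledField_some (hΦ l), fderiv_coupledField_eq_zero (hf κ) (hΦ κ) rfl
          (Pi.single_eq_of_ne hσ _), smul_zero, smul_zero]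
    · rw [fderiv_coupledField_eq_zero (hf l) (hΦ l) rfl (Pi.single_eq_of_ne hτ _), map_zero,
        smul_zero, smul_zero]

end ThirdOrderConditions

end Differentials

variable [Fintype K] {f : K → E → E} {Φ : K → E → P →L[ℝ] P}

theorem contDiff_coupledField {n : WithTop ℕ∞} (hf : ∀ k, ContDiff ℝ n (f k))
    (hΦ : ∀ k, ContDiff ℝ n (Φ k)) (k : Option K × K) :
    ContDiff ℝ n (coupledField f Φ k) := by
  rcases k with ⟨_ | σ, k⟩
  · exact ((hf k).comp contDiff_fst).prodMk contDiff_const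
  · exact contDiff_const.prodMk ((ContinuousLinearMap.single ℝ (fun _ => P) σ).contDiff.comp
      (((hΦ k).comp contDiff_fst).clm_apply (contDiff_pi.1 contDiff_snd k)))

theorem ThirdOrderConditions.coupled {ι : Type*} [Fintype ι] {A : K → ι → ι → ℝ}
    {b : K → ι → ℝ} (hA : ThirdOrderConditions A b) (hb : ∀ k i, b k i ≠ 0)
    (hf : ∀ k, ContDiff ℝ 2 (f k)) (hΦ : ∀ k, ContDiff ℝ 2 (Φ k)) (z : E × (K → P)) :
    ThirdOrderConditionsAt (coupledTableau A b) (fun k => b k.2) (coupledField f Φ) z := by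
  have hf₁ k : DifferentiableAt ℝ (f k) z.1 := (hf k).differentiable (by simp) _
  have hΦ₁ k : DifferentiableAt ℝ (Φ k) z.1 := (hΦ k).differentiable (by simp) _
  exact ⟨fun k => hA.sum_weight k.2, hA.coupled_sum_weight_abscissa hb hf₁ hΦ₁,
    hA.coupled_sum_weight_abscissa_abscissa hb hf hΦ z,
    hA.coupled_sum_weight_tableau_abscissa hb hf₁ hΦ₁⟩

end CoupledField

section AdjointMethod

open Filter Topology

variable {K E P ι : Type*} [Fintype K] [Fintype ι]
  [NormedAddCommGroup E] [NormedSpace ℝ E] [NormedAddCommGroup P] [NormedSpace ℝ P]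
  {A : K → ι → ι → ℝ} {b : K → ι → ℝ} {f : K → E → E} {Φ : K → E → P →L[ℝ] P}

section CoupledSystem

variable [DecidableEq K]

theorem sum_smul_coupledField (f : K → E → E) (Φ : K → E → P →L[ℝ] P)
    (c : Option K × K → ι → ℝ) (z : ι → E × (K → P)) :
    ∑ k, ∑ j, c k j • coupledField f Φ k (z j)
      = (∑ k, ∑ j, c (none, k) j • f k (z j).1,
          fun σ => ∑ k, ∑ j, c (some σ, k) j • Φ k (z j).1 ((z j).2 k)) := by
  rw [Fintype.sum_prod_type, Fintype.sum_option]
  ext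
  · simp [coupledField, Prod.fst_sum]
  · simp [coupledField, Prod.snd_sum, Pi.single_apply]

theorem sum_coupledField (f : K → E → E) (Φ : K → E → P →L[ℝ] P) (z : E × (K → P)) :
    ∑ k, coupledField f Φ k z = (∑ k, f k z.1, fun _ => ∑ k, Φ k z.1 (z.2 k)) := by
  simpa using sum_smul_coupledField f Φ 1 fun _ : Unit => z

theorem isStageSolution_coupledField_iff {h : ℝ} {y₀ : E} {p₀ : K → P} {Y : ι → E}
    {Q : K → ι → P} :
    IsStageSolution (coupledTableau A b) (coupledField f Φ) h (y₀, p₀)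
        (fun i => (Y i, fun σ => Q σ i)) ↔
      IsStageSolution A f h y₀ Y ∧ ∀ σ i,
        Q σ i = p₀ σ + h • ∑ k, ∑ j, adjointTableau A b σ k i j • Φ k (Y j) (Q k j) := by
  simp only [IsStageSolution, sum_smul_coupledField, Prod.smul_mk, Prod.mk_add_mk, Prod.mk.injEq,
    forall_and, funext_iff, Pi.add_apply, Pi.smul_apply, coupledTableau]
  exact and_congr_right fun _ => forall_comm

theorem arkStep_coupledField (h : ℝ) (y₀ : E) (p₀ : K → P) (Y : ι → E) (Q : K → ι → P) :
    arkStep (fun k => b k.2) (coupledField f Φ) h (y₀, p₀) (fun i => (Y i, fun σ => Q σ i))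
      = (arkStep b f h y₀ Y, fun σ => p₀ σ + h • ∑ k, ∑ i, b k i • Φ k (Y i) (Q k i)) := by
  rw [arkStep, sum_smul_coupledField]
  rfl

theorem hasDerivAt_coupledField {y : ℝ → E} {p : K → ℝ → P} {t : ℝ}
    (hy : HasDerivAt y (∑ k, f k (y t)) t)
    (hp : ∀ σ, HasDerivAt (p σ) (∑ k, Φ k (y t) (p k t)) t) :
    HasDerivAt (fun t => (y t, fun σ => p σ t))
      (∑ k, coupledField f Φ k (y t, fun σ => p σ t)) t := by
  rw [sum_coupledField]
  exact hy.prodMk (hasDerivAt_pi.2 hp)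

end CoupledSystem

theorem adjoint_local_error [ProperSpace E] [ProperSpace P] (hA : ThirdOrderConditions A b)
    (hb : ∀ k i, b k i ≠ 0) (hf : ∀ k, ContDiff ℝ 3 (f k)) (hΦ : ∀ k, ContDiff ℝ 3 (Φ k))
    {y : ℝ → E} {p : K → ℝ → P}
    (hy : ∀ᶠ t in 𝓝 0, HasDerivAt y (∑ k, f k (y t)) t)
    (hp : ∀ σ, ∀ᶠ t in 𝓝 0, HasDerivAt (p σ) (∑ k, Φ k (y t) (p k t)) t) (ρ : ℝ) :
    ∃ C > (0 : ℝ), ∃ h₀ > (0 : ℝ), ∀ h, 0 < h → h ≤ h₀ → ∀ (Y : ι → E) (Q : K → ι → P),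
      IsStageSolution A f h (y 0) Y →
      (∀ σ i, Q σ i
        = p σ 0 + h • ∑ k, ∑ j, adjointTableau A b σ k i j • Φ k (Y j) (Q k j)) →
      (∀ i, ‖Y i - y 0‖ ≤ ρ) → (∀ σ i, ‖Q σ i - p σ 0‖ ≤ ρ) →
      ‖arkStep b f h (y 0) Y - y h‖ ≤ C * h ^ 4 ∧
        ∀ σ, ‖p σ 0 + h • ∑ k, ∑ i, b k i • Φ k (Y i) (Q k i) - p σ h‖ ≤ C * h ^ 4 := by
  classical
  have hsol : ∀ᶠ t in 𝓝 0, HasDerivAt (fun t => (y t, fun σ => p σ t))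
      (∑ k, coupledField f Φ k (y t, fun σ => p σ t)) t := by
    filter_upwards [hy, eventually_all.2 hp] with t hyt hpt using hasDerivAt_coupledField hyt hpt
  have hcoupled := hA.coupled hb (fun k => (hf k).of_le (by norm_num))
    (fun k => (hΦ k).of_le (by norm_num)) (y 0, fun σ => p σ 0)
  obtain ⟨C, hC, h₀, hh₀, hbound⟩ :=
    arkStep_local_error hcoupled (contDiff_coupledField hf hΦ) hsol |ρ|
  refine ⟨C, hC, h₀, hh₀, fun h hpos hle Y Q hY hQ hYρ hQρ => ?_⟩
  have herr := hbound h hpos hle _ (isStageSolution_coupledField_iff.2 ⟨hY, hQ⟩) fun i =>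
    norm_prod_le_iff.2 ⟨(hYρ i).trans (le_abs_self ρ),
      (pi_norm_le_iff_of_nonneg (abs_nonneg ρ)).2 fun σ => (hQρ σ i).trans (le_abs_self ρ)⟩
  rw [arkStep_coupledField, norm_prod_le_iff] at herr
  exact ⟨herr.1, (pi_norm_le_iff_of_nonneg (by positivity)).1 herr.2⟩

end AdjointMethod

section ImexAdjoint

open Filter Topology

variable {ι : Type*} [Fintype ι] {d : ℕ}

theorem contDiff_jacMat_apply {n : WithTop ℕ∞} {g : (Fin d → ℝ) → (Fin d → ℝ)}
    (hg : ContDiff ℝ (n + 1) g) (i j : Fin d) : ContDiff ℝ n fun x => jacMat g x i j :=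
  contDiff_pi.1 ((hg.fderiv_right le_rfl).clm_apply contDiff_const) i

theorem contDiff_mulVecLin_toContinuousLinearMap {n : WithTop ℕ∞} {V : Type*}
    [NormedAddCommGroup V] [NormedSpace ℝ V] {m l : Type*} [Fintype m] [Fintype l]
    {M : V → Matrix m l ℝ} (hM : ∀ i j, ContDiff ℝ n fun x => M x i j) :
    ContDiff ℝ n fun x => (M x).mulVecLin.toContinuousLinearMap :=
  contDiff_clm_apply_iff.2 fun _ => contDiff_pi.2 fun i =>
    ContDiff.sum fun j _ => (hM i j).mul contDiff_const

/-- The two parts `D g` and `μ r` of the forward field. -/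
def imexField (D : Matrix (Fin d) (Fin d) ℝ) (μ : ℝ) (g r : (Fin d → ℝ) → (Fin d → ℝ)) :
    Fin 2 → (Fin d → ℝ) → (Fin d → ℝ) :=
  ![fun x => D *ᵥ g x, fun x => μ • r x]

/-- The two parts `-g'(x)ᵀ D̄` and `-μ r'(x)ᵀ` of the adjoint field. -/
noncomputable def imexAdjointField (Dbar : Matrix (Fin d) (Fin d) ℝ) (μ : ℝ)
    (g r : (Fin d → ℝ) → (Fin d → ℝ)) :
    Fin 2 → (Fin d → ℝ) → (Fin d → ℝ) →L[ℝ] (Fin d → ℝ) :=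
  ![fun x => (-((jacMat g x)ᵀ * Dbar)).mulVecLin.toContinuousLinearMap,
    fun x => (-(μ • (jacMat r x)ᵀ)).mulVecLin.toContinuousLinearMap]

variable {D Dbar : Matrix (Fin d) (Fin d) ℝ} {μ : ℝ} {g r : (Fin d → ℝ) → (Fin d → ℝ)}

theorem contDiff_imexField {n : WithTop ℕ∞} (hg : ContDiff ℝ n g) (hr : ContDiff ℝ n r)
    (k : Fin 2) : ContDiff ℝ n (imexField D μ g r k) := by
  fin_cases k
  · exact D.mulVecLin.toContinuousLinearMap.contDiff.comp hg
  · exact hr.const_smul μ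

theorem contDiff_imexAdjointField {n : WithTop ℕ∞} (hg : ContDiff ℝ (n + 1) g)
    (hr : ContDiff ℝ (n + 1) r) (k : Fin 2) : ContDiff ℝ n (imexAdjointField Dbar μ g r k) := by
  fin_cases k
  · exact contDiff_mulVecLin_toContinuousLinearMap fun i j => by
      simpa only [Matrix.neg_apply, mul_apply, transpose_apply] using
        (ContDiff.sum fun l _ => (contDiff_jacMat_apply hg l i).mul contDiff_const).neg
  · exact contDiff_mulVecLin_toContinuousLinearMap fun i j =>
      (contDiff_const.mul (contDiff_jacMat_apply hr j i)).neg

theorem sum_imexField (x : Fin d → ℝ) :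
    ∑ k, imexField D μ g r k x = D *ᵥ g x + μ • r x :=
  Fin.sum_univ_two _

theorem imexAdjointField_zero_apply (x q : Fin d → ℝ) :
    imexAdjointField Dbar μ g r 0 x q = -(((jacMat g x)ᵀ * Dbar) *ᵥ q) :=
  neg_mulVec q ((jacMat g x)ᵀ * Dbar)

theorem imexAdjointField_one_apply (x q : Fin d → ℝ) :
    imexAdjointField Dbar μ g r 1 x q = -(μ • ((jacMat r x)ᵀ *ᵥ q)) :=
  (neg_mulVec q (μ • (jacMat r x)ᵀ)).trans congr(-$(smul_mulVec μ (jacMat r x)ᵀ q))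

theorem sum_imexAdjointField (x : Fin d → ℝ) (q : Fin 2 → Fin d → ℝ) :
    ∑ k, imexAdjointField Dbar μ g r k x (q k)
      = -(((jacMat g x)ᵀ * Dbar) *ᵥ q 0) - μ • ((jacMat r x)ᵀ *ᵥ q 1) := by
  rw [Fin.sum_univ_two, imexAdjointField_zero_apply, imexAdjointField_one_apply, sub_eq_add_neg]

theorem add_smul_sum_imexField (h : ℝ) (y₀ : Fin d → ℝ) (c : Fin 2 → ι → ℝ)
    (Y : ι → Fin d → ℝ) :
    y₀ + h • ∑ k, ∑ j, c k j • imexField D μ g r k (Y j)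
      = y₀ + h • ∑ j, c 0 j • (D *ᵥ g (Y j)) + h • ∑ j, c 1 j • (μ • r (Y j)) := by
  rw [Fin.sum_univ_two, smul_add, ← add_assoc]
  rfl

theorem add_smul_sum_imexAdjointField (h : ℝ) (q₀ : Fin d → ℝ) (c : Fin 2 → ι → ℝ)
    (Y : ι → Fin d → ℝ) (Q : Fin 2 → ι → Fin d → ℝ) :
    q₀ + h • ∑ k, ∑ j, c k j • imexAdjointField Dbar μ g r k (Y j) (Q k j)
      = q₀ - h • ∑ j, c 0 j • (((jacMat g (Y j))ᵀ * Dbar) *ᵥ Q 0 j)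
        - h • ∑ j, c 1 j • (μ • ((jacMat r (Y j))ᵀ *ᵥ Q 1 j)) := by
  simp only [Fin.sum_univ_two, imexAdjointField_zero_apply, imexAdjointField_one_apply, smul_neg,
    sum_neg_distrib, smul_add, sub_eq_add_neg, add_assoc]

theorem ThirdOrderConditions.of_pair {ta a : ι → ι → ℝ} {tw w ct c : ι → ℝ}
    (hct : ∀ i, ct i = ∑ j, ta i j) (hc : ∀ i, c i = ∑ j, a i j)
    (h₁ : ∑ i, tw i = 1) (h₁' : ∑ i, w i = 1)
    (h₂ : ∀ w' ∈ ({tw, w} : Set (ι → ℝ)), ∀ d' ∈ ({ct, c} : Set (ι → ℝ)),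
      ∑ i, w' i * d' i = 1 / 2)
    (h₃ : ∀ w' ∈ ({tw, w} : Set (ι → ℝ)), ∀ d' ∈ ({ct, c} : Set (ι → ℝ)),
      ∀ e' ∈ ({ct, c} : Set (ι → ℝ)), ∑ i, w' i * d' i * e' i = 1 / 3)
    (h₄ : ∀ w' ∈ ({tw, w} : Set (ι → ℝ)), ∀ m ∈ ({ta, a} : Set (ι → ι → ℝ)),
      ∀ d' ∈ ({ct, c} : Set (ι → ℝ)), ∑ i, ∑ j, w' i * m i j * d' j = 1 / 6) :
    ThirdOrderConditions ![ta, a] ![tw, w] := by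
  have hweight (k : Fin 2) : ![tw, w] k ∈ ({tw, w} : Set (ι → ℝ)) := by fin_cases k <;> simp
  have htableau (k : Fin 2) : ![ta, a] k ∈ ({ta, a} : Set (ι → ι → ℝ)) := by
    fin_cases k <;> simp
  have habscissa (k : Fin 2) : abscissa (![ta, a] k) ∈ ({ct, c} : Set (ι → ℝ)) := by
    fin_cases k
    · exact .inl (funext fun i => (hct i).symm)
    · exact .inr (funext fun i => (hc i).symm)
  exact ⟨Fin.forall_fin_two.2 ⟨h₁, h₁'⟩, fun k l => h₂ _ (hweight k) _ (habscissa l),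
    fun k l m => h₃ _ (hweight k) _ (habscissa l) _ (habscissa m),
    fun k l m => h₄ _ (hweight k) _ (htableau l) _ (habscissa m)⟩

theorem sum_filter_lt_smul [LinearOrder ι] {V : Type*} [AddCommGroup V] [Module ℝ V]
    {a : ι → ℝ} {i : ι} (ha : ∀ j, i ≤ j → a j = 0) (v : ι → V) :
    ∑ j ∈ univ.filter (fun j => j < i), a j • v j = ∑ j, a j • v j :=
  sum_filter_of_ne fun j _ hj => lt_of_not_ge fun hij => hj (by rw [ha j hij, zero_smul])

theorem sum_filter_le_smul [LinearOrder ι] {V : Type*} [AddCommGroup V] [Module ℝ V]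
    {a : ι → ℝ} {i : ι} (ha : ∀ j, i < j → a j = 0) (v : ι → V) :
    ∑ j ∈ univ.filter (fun j => j ≤ i), a j • v j = ∑ j, a j • v j :=
  sum_filter_of_ne fun j _ hj => le_of_not_gt fun hij => hj (by rw [ha j hij, zero_smul])

end ImexAdjoint

open Filter Topology in
theorem imex_adjoint_third_order_alt1_general {ι : Type*} [Fintype ι] {d : ℕ}
    {ta a : ι → ι → ℝ} {tw w : ι → ℝ} (htw0 : ∀ i, tw i ≠ 0) (hw0 : ∀ i, w i ≠ 0)
    {tα α tβ β : ι → ι → ℝ}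
    (htα : ∀ i j, tα i j = tw j - (tw j / tw i) * ta j i)
    (hα : ∀ i j, α i j = w j - (w j / tw i) * ta j i)
    (htβ : ∀ i j, tβ i j = tw j - (tw j / w i) * a j i)
    (hβ : ∀ i j, β i j = w j - (w j / w i) * a j i)
    (hA : ThirdOrderConditions ![ta, a] ![tw, w])
    {μ : ℝ} {D Dbar : Matrix (Fin d) (Fin d) ℝ} {g r : (Fin d → ℝ) → (Fin d → ℝ)}
    (hg : ContDiff ℝ 4 g) (hr : ContDiff ℝ 4 r) {y pt p : ℝ → Fin d → ℝ}
    (hy : ∀ᶠ t in 𝓝 0, HasDerivAt y (D *ᵥ g (y t) + μ • r (y t)) t)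
    (hpt : ∀ᶠ t in 𝓝 0, HasDerivAt pt
      (-(((jacMat g (y t))ᵀ * Dbar) *ᵥ pt t) - μ • ((jacMat r (y t))ᵀ *ᵥ p t)) t)
    (hp : ∀ᶠ t in 𝓝 0, HasDerivAt p
      (-(((jacMat g (y t))ᵀ * Dbar) *ᵥ pt t) - μ • ((jacMat r (y t))ᵀ *ᵥ p t)) t)
    (h0eq : pt 0 = p 0) (ρ : ℝ) :
    ∃ C > (0:ℝ), ∃ h₀ > (0:ℝ), ∀ h : ℝ, 0 < h → h ≤ h₀ → ∀ Y tP P : ι → Fin d → ℝ,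
      (∀ i, Y i = y 0 + h • ∑ j, ta i j • (D *ᵥ g (Y j)) + h • ∑ j, a i j • (μ • r (Y j))) →
      (∀ i, tP i = p 0
          - h • ∑ j, tα i j • (((jacMat g (Y j))ᵀ * Dbar) *ᵥ tP j)
          - h • ∑ j, α i j • (μ • ((jacMat r (Y j))ᵀ *ᵥ P j))) →
      (∀ i, P i = p 0
          - h • ∑ j, tβ i j • (((jacMat g (Y j))ᵀ * Dbar) *ᵥ tP j)
          - h • ∑ j, β i j • (μ • ((jacMat r (Y j))ᵀ *ᵥ P j))) →
      (∀ i, ‖Y i - y 0‖ ≤ ρ ∧ ‖tP i - p 0‖ ≤ ρ ∧ ‖P i - p 0‖ ≤ ρ) →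
      ‖(y 0 + h • ∑ i, tw i • (D *ᵥ g (Y i)) + h • ∑ i, w i • (μ • r (Y i))) - y h‖
      + ‖(pt 0 - h • ∑ i, tw i • (((jacMat g (Y i))ᵀ * Dbar) *ᵥ tP i)
               - h • ∑ i, w i • (μ • ((jacMat r (Y i))ᵀ *ᵥ P i))) - pt h‖
      + ‖(p 0 - h • ∑ i, tw i • (((jacMat g (Y i))ᵀ * Dbar) *ᵥ tP i)
              - h • ∑ i, w i • (μ • ((jacMat r (Y i))ᵀ *ᵥ P i))) - p h‖
      ≤ C * h ^ 4 := by
  obtain rfl : tα = adjointTableau ![ta, a] ![tw, w] 0 0 := funext₂ htα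
  obtain rfl : α = adjointTableau ![ta, a] ![tw, w] 0 1 := funext₂ hα
  obtain rfl : tβ = adjointTableau ![ta, a] ![tw, w] 1 0 := funext₂ htβ
  obtain rfl : β = adjointTableau ![ta, a] ![tw, w] 1 1 := funext₂ hβ
  have hf := contDiff_imexField (n := 3) (D := D) (μ := μ) (hg.of_le (by norm_num))
    (hr.of_le (by norm_num))
  have hΦ := contDiff_imexAdjointField (n := 3) (Dbar := Dbar) (μ := μ)
    (hg.of_le (by norm_num)) (hr.of_le (by norm_num))
  have hadj : ∀ k, ∀ᶠ t in 𝓝 0, HasDerivAt (![pt, p] k)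
      (∑ l, imexAdjointField Dbar μ g r l (y t) (![pt, p] l t)) t := Fin.forall_fin_two.2
    ⟨hpt.mono fun t ht => ht.congr_deriv (sum_imexAdjointField (y t) fun l => ![pt, p] l t).symm,
      hp.mono fun t ht => ht.congr_deriv (sum_imexAdjointField (y t) fun l => ![pt, p] l t).symm⟩
  obtain ⟨C, hC, h₀, hh₀, hbound⟩ := adjoint_local_error hA
    (Fin.forall_fin_two.2 ⟨htw0, hw0⟩) hf hΦ
    (hy.mono fun t ht => ht.congr_deriv (sum_imexField (y t)).symm) hadj ρ
  refine ⟨3 * C, by positivity, h₀, hh₀, ?_⟩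
  intro h hpos hle Y tP P hY htP hP hρ
  have hYstage : IsStageSolution ![ta, a] (imexField D μ g r) h (y 0) Y := fun i =>
    (hY i).trans (add_smul_sum_imexField h (y 0) (fun k => ![ta, a] k i) Y).symm
  have hQstage : ∀ σ i, ![tP, P] σ i = ![pt, p] σ 0 + h • ∑ k, ∑ j,
      adjointTableau ![ta, a] ![tw, w] σ k i j •
        imexAdjointField Dbar μ g r k (Y j) (![tP, P] k j) := by
    simp only [add_smul_sum_imexAdjointField h _ _ Y ![tP, P], Fin.forall_fin_two]
    rw [← h0eq] at htP
    exact ⟨htP, hP⟩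
  have hQρ : ∀ σ i, ‖![tP, P] σ i - ![pt, p] σ 0‖ ≤ ρ := Fin.forall_fin_two.2
    ⟨fun i => congr(‖tP i - $h0eq‖).trans_le (hρ i).2.1, fun i => (hρ i).2.2⟩
  obtain ⟨hyerr, hperr⟩ := hbound h hpos hle Y ![tP, P] hYstage hQstage (fun i => (hρ i).1) hQρ
  rw [arkStep, add_smul_sum_imexField] at hyerr
  simp only [add_smul_sum_imexAdjointField h _ _ Y ![tP, P]] at hperr
  calc
    _ ≤ C * h ^ 4 + C * h ^ 4 + C * h ^ 4 := add_le_add (add_le_add hyerr (hperr 0)) (hperr 1)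
    _ = _ := by ring

/-- Theorem 1, third-order part (first alternative): if the IMEX Runge–Kutta
method satisfies the third-order conditions of additive Runge–Kutta methods
together with the extra conditions `Σ ω_i γ_i² = Σ ω_i γ̃_i² = Σ ω_i γ_i γ̃_i = 1/3`,
then one step of the combined forward–adjoint scheme has a local error of
order `h⁴`. -/
theorem imex_adjoint_third_order_alt1 (s d : ℕ) (hs : 1 ≤ s) (hd : 1 ≤ d)
    (ta a : Fin s → Fin s → ℝ) (tw w : Fin s → ℝ)
    (hta : ∀ i j : Fin s, i ≤ j → ta i j = 0)
    (ha : ∀ i j : Fin s, i < j → a i j = 0)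
    (htw0 : ∀ i, tw i ≠ 0) (hw0 : ∀ i, w i ≠ 0)
    (tα α tβ β : Fin s → Fin s → ℝ)
    (htα : ∀ i j, tα i j = tw j - (tw j / tw i) * ta j i)
    (hα : ∀ i j, α i j = w j - (w j / tw i) * ta j i)
    (htβ : ∀ i j, tβ i j = tw j - (tw j / w i) * a j i)
    (hβ : ∀ i j, β i j = w j - (w j / w i) * a j i)
    (ε : ℝ) (hε : 0 < ε)
    (D Dbar : Matrix (Fin d) (Fin d) ℝ)
    (g r : (Fin d → ℝ) → (Fin d → ℝ))
    (hg : ContDiff ℝ (⊤ : ℕ∞) g) (hr : ContDiff ℝ (⊤ : ℕ∞) r)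
    (hgb : ∀ n : ℕ, ∃ C, ∀ x, ‖iteratedFDeriv ℝ n g x‖ ≤ C)
    (hrb : ∀ n : ℕ, ∃ C, ∀ x, ‖iteratedFDeriv ℝ n r x‖ ≤ C)
    -- third-order conditions of additive Runge–Kutta methods
    (hord1 : ∑ i, tw i = 1) (hord1' : ∑ i, w i = 1)
    (ct c : Fin s → ℝ)
    (hct : ∀ i, ct i = ∑ j, ta i j) (hc : ∀ i, c i = ∑ j, a i j)
    (hord2 : ∀ w' ∈ ({tw, w} : Set (Fin s → ℝ)), ∀ d' ∈ ({ct, c} : Set (Fin s → ℝ)),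
      ∑ i, w' i * d' i = 1 / 2)
    (hord3a : ∀ w' ∈ ({tw, w} : Set (Fin s → ℝ)), ∀ d' ∈ ({ct, c} : Set (Fin s → ℝ)),
      ∀ e' ∈ ({ct, c} : Set (Fin s → ℝ)), ∑ i, w' i * d' i * e' i = 1 / 3)
    (hord3b : ∀ w' ∈ ({tw, w} : Set (Fin s → ℝ)),
      ∀ m ∈ ({ta, a} : Set (Fin s → Fin s → ℝ)), ∀ d' ∈ ({ct, c} : Set (Fin s → ℝ)),
      ∑ i, ∑ j, w' i * m i j * d' j = 1 / 6)
    -- row sums of the adjoint coefficients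
    (gt ga : Fin s → ℝ)
    (hgt : ∀ i, gt i = ∑ j, tα i j) (hga : ∀ i, ga i = ∑ j, α i j)
    (hextra1 : ∑ i, w i * ga i ^ 2 = 1 / 3)
    (hextra2 : ∑ i, w i * gt i ^ 2 = 1 / 3)
    (hextra3 : ∑ i, w i * ga i * gt i = 1 / 3)
    -- exact solution of the coupled forward–adjoint system
    (y pt p : ℝ → Fin d → ℝ)
    (hy : ∀ t, HasDerivAt y (D *ᵥ g (y t) + ε⁻¹ • r (y t)) t)
    (hpt : ∀ t, HasDerivAt pt
      (-(((jacMat g (y t))ᵀ * Dbar) *ᵥ pt t)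
        - ε⁻¹ • ((jacMat r (y t))ᵀ *ᵥ p t)) t)
    (hp : ∀ t, HasDerivAt p
      (-(((jacMat g (y t))ᵀ * Dbar) *ᵥ pt t)
        - ε⁻¹ • ((jacMat r (y t))ᵀ *ᵥ p t)) t)
    (h0eq : pt 0 = p 0) :
    ∃ C > (0:ℝ), ∃ h₀ > (0:ℝ), ∀ h : ℝ, 0 < h → h ≤ h₀ →
      ∀ Y tP P : Fin s → Fin d → ℝ,
      (∀ i, Y i = y 0
          + h • ∑ j ∈ univ.filter (fun j => j < i), ta i j • (D *ᵥ g (Y j))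
          + h • ∑ j ∈ univ.filter (fun j => j ≤ i), a i j • (ε⁻¹ • r (Y j))) →
      (∀ i, tP i = p 0
          - h • ∑ j, tα i j • (((jacMat g (Y j))ᵀ * Dbar) *ᵥ tP j)
          - h • ∑ j, α i j • (ε⁻¹ • ((jacMat r (Y j))ᵀ *ᵥ P j))) →
      (∀ i, P i = p 0
          - h • ∑ j, tβ i j • (((jacMat g (Y j))ᵀ * Dbar) *ᵥ tP j)
          - h • ∑ j, β i j • (ε⁻¹ • ((jacMat r (Y j))ᵀ *ᵥ P j))) →
      (∀ i, ‖Y i - y 0‖ ≤ 1 ∧ ‖tP i - p 0‖ ≤ 1 ∧ ‖P i - p 0‖ ≤ 1) →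
      ‖(y 0 + h • ∑ i, tw i • (D *ᵥ g (Y i))
            + h • ∑ i, w i • (ε⁻¹ • r (Y i))) - y h‖
      + ‖(pt 0 - h • ∑ i, tw i • (((jacMat g (Y i))ᵀ * Dbar) *ᵥ tP i)
               - h • ∑ i, w i • (ε⁻¹ • ((jacMat r (Y i))ᵀ *ᵥ P i))) - pt h‖
      + ‖(p 0 - h • ∑ i, tw i • (((jacMat g (Y i))ᵀ * Dbar) *ᵥ tP i)
              - h • ∑ i, w i • (ε⁻¹ • ((jacMat r (Y i))ᵀ *ᵥ P i))) - p h‖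
      ≤ C * h ^ 4 := by
  simp only [sum_filter_lt_smul (hta _), sum_filter_le_smul (ha _)]
  exact imex_adjoint_third_order_alt1_general htw0 hw0 htα hα htβ hβ
    (.of_pair hct hc hord1 hord1' hord2 hord3a hord3b)
    (mod_cast contDiff_infty.1 hg 4) (mod_cast contDiff_infty.1 hr 4)
    (.of_forall hy) (.of_forall hpt) (.of_forall hp) h0eq 1
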